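/- arXiv:1212.3364 — 7 statements merged into one kernel-verified Lean document; each statement's English description precedes it below -/
import Mathlib

section
/- Let q ∈ (0,1) and define 𝒫_q(x) = 1/2 + 2·Σ_{j=1}^∞ cos(jx)/(q^j + q^{−j}). Then for every x ∈ ℝ, 𝒫_q(x) > (1/2 + 2q/((1+q²)(1−q)))·((1−q)/(1+q))^{4/(1−q²)}. -/
open Real

/-- The Poisson kernel for the heat conduction equation,
`𝒫_q(x) = 1/2 + 2 ∑_{j=1}^∞ cos(jx)/(q^j + q^{-j})`. -/
noncomputable def heatPoissonKernel (q : ℝ) (x : ℝ) : ℝ :=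
  1 / 2 + 2 * ∑' j : ℕ, Real.cos ((j + 1 : ℝ) * x) / (q ^ (j + 1) + q⁻¹ ^ (j + 1))

namespace HPK

/-- `r n = q^(2n+1)` -/
noncomputable def r (q : ℝ) (n : ℕ) : ℝ := q ^ (2 * n + 1)
noncomputable def b (q : ℝ) (n : ℕ) : ℝ := (1 + r q n ^ 2) / (2 * r q n)
noncomputable def u (q : ℝ) (k : ℕ) : ℝ := (1 + q ^ (2 * k)) / (1 - q ^ (2 * k))
noncomputable def U (q : ℝ) (k : ℕ) : ℝ := ∏ i ∈ Finset.range k, u q (i + 1)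
noncomputable def g (q y : ℝ) (N : ℕ) : ℝ := ∏ n ∈ Finset.range N, (b q n + y) / (b q n - y)
noncomputable def c (q y : ℝ) (n : ℕ) : ℝ := r q n * (y - r q n) / (1 - 2 * r q n * y + r q n ^ 2)
noncomputable def a (q : ℝ) (n : ℕ) : ℝ := q ^ (2 * n) / (1 + q ^ (2 * n))
noncomputable def D (q y : ℝ) (n : ℕ) : ℝ := 4 * c q y n + 2 * (a q (n + 1) + a q n)


theorem r_pos {q : ℝ} (h0 : 0 < q) (n : ℕ) : 0 < r q n := by unfold r; positivity

theorem a_nonneg {q : ℝ} (h0 : 0 < q) (n : ℕ) : 0 ≤ a q n := by unfold a; positivity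

theorem a_le {q : ℝ} (h0 : 0 < q) (n : ℕ) : a q n ≤ (q ^ 2) ^ n := by
  unfold a
  rw [pow_mul]
  apply div_le_self (by positivity)
  have : 0 < (q ^ 2) ^ n := by positivity
  linarith


theorem r_lt {q : ℝ} (h0 : 0 < q) (h1 : q < 1) (n : ℕ) : r q n < 1 := by
  unfold r; exact pow_lt_one₀ h0.le h1 (by omega)

theorem r_anti {q : ℝ} (h0 : 0 < q) (h1 : q < 1) {m n : ℕ} (h : m < n) : r q n < r q m := by
  unfold r; exact pow_lt_pow_right_of_lt_one₀ h0 h1 (by omega)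

theorem r_le {q : ℝ} (h0 : 0 < q) (h1 : q < 1) (n : ℕ) : r q n ≤ q := by
  unfold r
  calc q ^ (2 * n + 1) ≤ q ^ 1 := pow_le_pow_of_le_one h0.le h1.le (by omega)
    _ = q := pow_one q

theorem b_gt {q : ℝ} (h0 : 0 < q) (h1 : q < 1) (n : ℕ) : 1 < b q n := by
  have h2 := r_pos h0 n
  have h3 := r_lt h0 h1 n
  unfold b
  rw [lt_div_iff₀ (by positivity)]
  nlinarith [sq_pos_of_pos (sub_pos.2 h3)]

theorem one_sub_pos {q : ℝ} (h0 : 0 < q) (h1 : q < 1) (k : ℕ) : 0 < 1 - q ^ (2 * (k + 1)) :=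
  sub_pos.2 (pow_lt_one₀ h0.le h1 (by omega))

theorem u_ge {q : ℝ} (h0 : 0 < q) (h1 : q < 1) (k : ℕ) : 1 ≤ u q (k + 1) := by
  unfold u
  rw [le_div_iff₀ (one_sub_pos h0 h1 k)]
  have : 0 < q ^ (2 * (k + 1)) := by positivity
  linarith

theorem U_pos {q : ℝ} (h0 : 0 < q) (h1 : q < 1) (k : ℕ) : 0 < U q k := by
  unfold U
  exact Finset.prod_pos fun i _ => lt_of_lt_of_le one_pos (u_ge h0 h1 i)

theorem U_succ {q : ℝ} (h0 : 0 < q) (h1 : q < 1) (k : ℕ) : U q (k + 1) = U q k * u q (k + 1) := by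
  unfold U; rw [Finset.prod_range_succ]

theorem U_mono {q : ℝ} (h0 : 0 < q) (h1 : q < 1) : Monotone (U q) := by
  apply monotone_nat_of_le_succ
  intro k
  rw [U_succ h0 h1]
  exact le_mul_of_one_le_right (U_pos h0 h1 k).le (u_ge h0 h1 k)

theorem U_lim {q : ℝ} (h0 : 0 < q) (h1 : q < 1) : ∃ L : ℝ, 0 < L ∧ Filter.Tendsto (U q) Filter.atTop (nhds L) ∧ ∀ k, U q k ≤ L := by
  have hs : Summable fun i : ℕ => u q (i + 1) - 1 := by
    have hq2 : q ^ 2 < 1 := pow_lt_one₀ h0.le h1 (by norm_num)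
    refine Summable.of_nonneg_of_le (f := fun i : ℕ => (2 / (1 - q ^ 2)) * (q ^ 2) ^ i)
      (fun i => sub_nonneg.2 (u_ge h0 h1 i)) ?_
      ((summable_geometric_of_lt_one (by positivity) hq2).mul_left _)
    intro i
    have e : u q (i + 1) - 1 = 2 * q ^ (2 * (i + 1)) / (1 - q ^ (2 * (i + 1))) := by
      unfold u
      have := (one_sub_pos h0 h1 i).ne'
      field_simp
      ring
    rw [e, div_mul_eq_mul_div, ← pow_mul]
    have h3 : q ^ (2 * (i + 1)) ≤ q ^ (2 * i) := pow_le_pow_of_le_one h0.le h1.le (by omega)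
    have h4 : q ^ (2 * (i + 1)) ≤ q ^ 2 := pow_le_pow_of_le_one h0.le h1.le (by omega)
    have : 0 < 1 - q ^ 2 := by linarith
    gcongr
  have hm : Multipliable fun i : ℕ => 1 + (u q (i + 1) - 1) :=
    Real.multipliable_one_add_of_summable hs
  have ht := hm.hasProd.tendsto_prod_nat
  simp only [add_sub_cancel] at ht
  have hle : ∀ k, U q k ≤ _ := fun k => (U_mono h0 h1).ge_of_tendsto ht k
  exact ⟨_, lt_of_lt_of_le (U_pos h0 h1 0) (hle 0), ht, hle⟩

theorem ratio_gt {q : ℝ} (h0 : 0 < q) (h1 : q < 1) {m n : ℕ} (h : n < m) :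
    (b q m + b q n) / (b q m - b q n) = u q (m - n) * u q (m + n + 1) := by
  obtain ⟨k, rfl⟩ := Nat.exists_eq_add_of_lt h
  have e1 : q ^ (2 * (n + k + 1 - n)) = r q (n + k + 1) / r q n := by
    unfold r
    rw [eq_div_iff (by positivity), ← pow_add]
    congr 1; omega
  have e2 : q ^ (2 * (n + k + 1 + n + 1)) = r q (n + k + 1) * r q n := by
    unfold r
    rw [← pow_add]
    congr 1; omega
  unfold u b
  rw [e1, e2]
  have p1 := r_pos h0 n
  have p2 := r_pos h0 (n + k + 1)
  have p3 := r_anti h0 h1 h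
  have p4 := r_lt h0 h1 n
  have p5 := r_lt h0 h1 (n + k + 1)
  generalize r q n = x at *
  generalize r q (n + k + 1) = y at *
  have p6 : x * y < 1 := by nlinarith
  have n1 : x - y ≠ 0 := by linarith
  have n2 : 1 - y * x ≠ 0 := by nlinarith
  have n3 : (1 + y ^ 2) / (2 * y) - (1 + x ^ 2) / (2 * x) ≠ 0 := by
    have : (1 + y ^ 2) / (2 * y) - (1 + x ^ 2) / (2 * x) = (x - y) * (1 - y * x) / (2 * x * y) := by
      field_simp; ring
    rw [this]; positivity
  have n4 : 1 - y / x ≠ 0 := by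
    have : 1 - y / x = (x - y) / x := by field_simp
    rw [this]; positivity
  rw [div_mul_div_comm, div_eq_div_iff n3 (mul_ne_zero n4 n2)]
  field_simp
  ring

theorem prod_low {q : ℝ} (h0 : 0 < q) (h1 : q < 1) (n j : ℕ) (hj : j ≤ n) :
    (∏ m ∈ Finset.range j, (b q m + b q n) / (b q m - b q n)) * U q (n - j)
      = (-1) ^ j * U q (n + j) := by
  induction j with
  | zero => simp
  | succ j ih =>
    have ih := ih (by omega)
    rw [Finset.prod_range_succ]
    have e : (b q j + b q n) / (b q j - b q n) = - (u q (n - j) * u q (n + j + 1)) := by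
      rw [← ratio_gt h0 h1 (show j < n by omega), ← neg_sub (b q n), div_neg, add_comm]
    rw [e, ← add_assoc, U_succ h0 h1 (n + j)]
    have e2 : U q (n - j) = U q (n - (j + 1)) * u q (n - j) := by
      have : n - j = (n - (j + 1)) + 1 := by omega
      conv_lhs => rw [this]
      rw [U_succ h0 h1, ← this]
    rw [e2] at ih
    rw [pow_succ]
    linear_combination (-u q (n + j + 1)) * ih

theorem prod_all {q : ℝ} (h0 : 0 < q) (h1 : q < 1) (n k : ℕ) :
    (∏ m ∈ (Finset.range (n + k + 1)).erase n, (b q m + b q n) / (b q m - b q n))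
      = (-1) ^ n * (U q k * U q (n + k + 1 + n)) / u q (2 * n + 1) := by
  have hu : u q (2 * n + 1) ≠ 0 := (lt_of_lt_of_le one_pos (u_ge h0 h1 (2 * n))).ne'
  induction k with
  | zero =>
    have : (Finset.range (n + 0 + 1)).erase n = Finset.range n := by
      ext m; simp; omega
    rw [this]
    have := prod_low h0 h1 n n le_rfl
    have hU0 : U q 0 = 1 := by simp [U]
    rw [Nat.sub_self, hU0, mul_one] at this
    rw [this, hU0, show n + 0 + 1 + n = n + n + 1 by ring, U_succ h0 h1,
      show n + n + 1 = 2 * n + 1 by ring]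
    field_simp
  | succ k ih =>
    have : (Finset.range (n + (k + 1) + 1)).erase n
        = insert (n + k + 1) ((Finset.range (n + k + 1)).erase n) := by
      ext m; simp; omega
    rw [this, Finset.prod_insert (by simp), ih, ratio_gt h0 h1 (by omega), U_succ h0 h1 k,
      show n + (k + 1) + 1 + n = (n + k + 1 + n) + 1 by ring, U_succ h0 h1 (n + k + 1 + n),
      show n + k + 1 - n = k + 1 by omega]
    field_simp

theorem b_anti {q : ℝ} (h0 : 0 < q) (h1 : q < 1) {m n : ℕ} (h : m < n) : b q m < b q n := by
  have p1 := r_pos h0 n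
  have p2 := r_pos h0 m
  have p3 := r_anti h0 h1 h
  have p4 := r_lt h0 h1 n
  have p5 := r_lt h0 h1 m
  unfold b
  rw [div_lt_div_iff₀ (by positivity) (by positivity)]
  have : 0 < (r q m - r q n) * (1 - r q m * r q n) :=
    mul_pos (by linarith) (by nlinarith)
  nlinarith

theorem D_eq {q : ℝ} (h0 : 0 < q) (h1 : q < 1) (y : ℝ) (hy : |y| ≤ 1) (n : ℕ) :
    D q y n = 2 * b q n / u q (2 * n + 1) * ((y + b q 0) / ((b q n + b q 0) * (b q n - y))) := by
  have hb := b_gt h0 h1 n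
  have hb0 := b_gt h0 h1 0
  have hy' := (abs_le.1 hy)
  have e0 : b q 0 = (1 + q ^ 2) / (2 * q) := by simp [b, r]
  have p1 := r_pos h0 n
  have p4 := r_lt h0 h1 n
  have e1 : q ^ (2 * (n + 1)) = r q n * q := by unfold r; ring
  have e2 : q ^ (2 * n) = r q n / q := by
    unfold r; rw [eq_div_iff h0.ne']; ring
  have e3 : q ^ (2 * (2 * n + 1)) = r q n ^ 2 := by unfold r; ring
  have n1 : b q n - y ≠ 0 := by linarith
  have n2 : b q n + b q 0 ≠ 0 := by linarith
  unfold D c a u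
  rw [e1, e2, e3]
  rw [e0] at *
  unfold b at *
  generalize r q n = x at *
  have n3 : 1 - 2 * x * y + x ^ 2 ≠ 0 := by
    have : 1 - 2 * x * y + x ^ 2 = 2 * x * ((1 + x ^ 2) / (2 * x) - y) := by field_simp; ring
    rw [this]; positivity
  have n5 : (1 + x ^ 2) / (2 * x) - y = (1 - 2 * x * y + x ^ 2) / (2 * x) := by
    field_simp; ring
  have n6 : (1 + x ^ 2) / (2 * x) + (1 + q ^ 2) / (2 * q) = (x + q) * (1 + x * q) / (2 * x * q) := by
    field_simp; ring
  have n7 : 1 - x ^ 2 ≠ 0 := by nlinarith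
  have n8 : 1 + x / q = (q + x) / q := by field_simp
  have n9 : (1 + q ^ 2) / (2 * q) + y = (1 + q ^ 2 + 2 * q * y) / (2 * q) := by field_simp
  rw [n5, n6, n8, add_comm y, n9]
  have n10 : q + x ≠ 0 := by positivity
  have n11 : 1 + x * q ≠ 0 := by positivity
  rw [add_comm x q]
  obtain ⟨E, hE⟩ : ∃ E, E = 1 - 2 * x * y + x ^ 2 := ⟨_, rfl⟩
  rw [← hE] at n3 ⊢
  field_simp
  rw [hE]
  ring

theorem g_eq {q : ℝ} (h0 : 0 < q) (h1 : q < 1) (y : ℝ) (hy : |y| ≤ 1) (N : ℕ) :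
    g q y (N + 1) = ∑ n ∈ Finset.range (N + 1), (-1) ^ n * (U q (N - n) * U q (N + 1 + n)) * D q y n := by
  have hy' := (abs_le.1 hy)
  have hinj : Set.InjOn (b q) (Finset.range (N + 1) : Finset ℕ) := by
    intro m _ n _ h
    rcases lt_trichotomy m n with h' | h' | h'
    · exact absurd h (b_anti h0 h1 h').ne
    · exact h'
    · exact absurd h (b_anti h0 h1 h').ne'
  set F : Polynomial ℝ := ∏ m ∈ Finset.range N, (Polynomial.X + Polynomial.C (b q (m + 1))) with hF
  have hdeg : F.degree < (Finset.range (N + 1)).card := by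
    rw [hF, Polynomial.degree_prod]
    simp only [Polynomial.degree_X_add_C]
    simp
    exact_mod_cast Nat.lt_succ_self N
  have hFe : ∀ z, F.eval z = ∏ m ∈ Finset.range N, (b q (m + 1) + z) := by
    intro z; rw [hF, Polynomial.eval_prod]; simp [add_comm]
  have hFz : ∀ z, F.eval z * (b q 0 + z) = ∏ m ∈ Finset.range (N + 1), (b q m + z) := by
    intro z; rw [hFe, Finset.prod_range_succ']
  have hint := Lagrange.eq_interpolate (f := F) hinj hdeg
  have hev := congrArg (Polynomial.eval y) hint
  rw [Lagrange.eval_interpolate_not_at_node _ (fun i _ => by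
    have := b_gt h0 h1 i; intro h; linarith)] at hev
  have hden : ∏ n ∈ Finset.range (N + 1), (b q n - y) ≠ 0 :=
    Finset.prod_ne_zero_iff.2 fun i _ => by have := b_gt h0 h1 i; intro h; linarith
  have hnod : Polynomial.eval y (Lagrange.nodal (Finset.range (N + 1)) (b q))
      = (-1) ^ (N + 1) * ∏ n ∈ Finset.range (N + 1), (b q n - y) := by
    rw [Lagrange.eval_nodal]
    have : ∀ n ∈ Finset.range (N + 1), y - b q n = (-1) * (b q n - y) := fun n _ => by ring
    rw [Finset.prod_congr rfl this, Finset.prod_mul_distrib]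
    simp
  unfold g
  rw [Finset.prod_div_distrib, ← hFz, hev, hnod]
  rw [div_eq_iff hden]
  rw [Finset.mul_sum, Finset.sum_mul, Finset.sum_mul]
  refine Finset.sum_congr rfl fun n hn => ?_
  have hn' : n ≤ N := by simpa [Nat.lt_succ_iff] using hn
  have hp := prod_all h0 h1 n (N - n)
  rw [show n + (N - n) + 1 = N + 1 by omega] at hp
  have hFn := hFz (b q n)
  rw [← Finset.mul_prod_erase _ _ hn] at hFn
  have hbn := b_gt h0 h1 n
  have hb0 := b_gt h0 h1 0
  have hw : Lagrange.nodalWeight (Finset.range (N + 1)) (b q) n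
      = (-1) ^ N * ∏ m ∈ (Finset.range (N + 1)).erase n, (b q m - b q n)⁻¹ := by
    unfold Lagrange.nodalWeight
    have : ∀ m ∈ (Finset.range (N + 1)).erase n,
        (b q n - b q m)⁻¹ = (-1) * (b q m - b q n)⁻¹ := fun m _ => by
      rw [← neg_sub, inv_neg]; ring
    rw [Finset.prod_congr rfl this, Finset.prod_mul_distrib]
    simp [Finset.card_erase_of_mem hn]
  rw [hw, D_eq h0 h1 y hy]
  simp only [div_eq_mul_inv] at hp
  rw [Finset.prod_mul_distrib] at hp
  have hs : ((-1 : ℝ)) ^ N * (-1) ^ N = 1 := by rw [← mul_pow]; simp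
  have n1 : b q 0 + b q n ≠ 0 := by linarith
  have n2 : b q n - y ≠ 0 := by linarith
  have hFn' : F.eval (b q n) = (b q n + b q n) *
      (∏ m ∈ (Finset.range (N + 1)).erase n, (b q m + b q n)) / (b q 0 + b q n) := by
    rw [eq_div_iff n1]; exact hFn
  rw [hFn']
  have n3 : (y - b q n)⁻¹ = - (b q n - y)⁻¹ := by rw [← neg_sub, inv_neg]
  rw [n3, pow_succ]
  generalize (∏ m ∈ (Finset.range (N + 1)).erase n, (b q m + b q n)) = A at *
  generalize (∏ m ∈ (Finset.range (N + 1)).erase n, (b q m - b q n)⁻¹) = B at *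
  generalize (∏ m ∈ (Finset.range (N + 1)), (b q m - y)) = E at *
  rw [add_comm (b q n) (b q 0), add_comm y]
  simp only [div_eq_mul_inv, mul_inv]
  generalize (b q 0 + b q n)⁻¹ = I1
  generalize (b q n - y)⁻¹ = I2
  linear_combination (A * B * E * 2 * b q n * I1 * I2 * (b q 0 + y)) * hs
    + 2 * b q n * I1 * I2 * (b q 0 + y) * E * hp

theorem c_bound {q : ℝ} (h0 : 0 < q) (h1 : q < 1) (y : ℝ) (hy : |y| ≤ 1) (n : ℕ) :
    |c q y n| ≤ (2 * q / (1 - q) ^ 2) * (q ^ 2) ^ n := by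
  have hy' := (abs_le.1 hy)
  have p1 := r_pos h0 n
  have p2 := r_lt h0 h1 n
  have p3 := r_le h0 h1 n
  have hd : (1 - q) ^ 2 ≤ 1 - 2 * r q n * y + r q n ^ 2 := by
    have : (1 - q) ^ 2 ≤ (1 - r q n) ^ 2 := by
      apply pow_le_pow_left₀ <;> linarith
    nlinarith
  have hq : 0 < (1 - q) ^ 2 := by have : 0 < 1 - q := by linarith
                                  positivity
  have e : (2 * q / (1 - q) ^ 2) * (q ^ 2) ^ n = r q n * 2 / (1 - q) ^ 2 := by
    unfold r; rw [← pow_mul, pow_succ]; ring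
  unfold c
  rw [e, abs_div, abs_mul, abs_of_pos p1, abs_of_pos (lt_of_lt_of_le hq hd)]
  have : |y - r q n| ≤ 2 := abs_le.2 ⟨by linarith, by linarith⟩
  gcongr

theorem sq_lt {q : ℝ} (h0 : 0 < q) (h1 : q < 1) : q ^ 2 < 1 := pow_lt_one₀ h0.le h1 (by norm_num)

theorem c_summable {q : ℝ} (h0 : 0 < q) (h1 : q < 1) (y : ℝ) (hy : |y| ≤ 1) : Summable fun n => |c q y n| :=
  Summable.of_nonneg_of_le (fun _ => abs_nonneg _) (c_bound h0 h1 y hy)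
    ((summable_geometric_of_lt_one (by positivity) (sq_lt h0 h1)).mul_left _)

theorem a_summable {q : ℝ} (h0 : 0 < q) (h1 : q < 1) : Summable fun n => a q n :=
  Summable.of_nonneg_of_le (a_nonneg h0) (a_le h0)
    (summable_geometric_of_lt_one (by positivity) (sq_lt h0 h1))

theorem D_summable {q : ℝ} (h0 : 0 < q) (h1 : q < 1) (y : ℝ) (hy : |y| ≤ 1) : Summable fun n => |D q y n| := by
  have ha := a_summable h0 h1
  have ha' := (summable_nat_add_iff 1).2 ha
  refine Summable.of_nonneg_of_le (fun _ => abs_nonneg _) (fun n => ?_)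
    (((c_summable h0 h1 y hy).mul_left 4).add ((ha'.add ha).mul_left 2))
  unfold D
  refine (abs_add_le _ _).trans ?_
  rw [abs_mul, abs_of_nonneg (show (0:ℝ) ≤ 4 by norm_num),
    abs_of_nonneg (show 0 ≤ 2 * (a q (n + 1) + a q n) by
      have := a_nonneg h0 n
      have := a_nonneg h0 (n + 1)
      linarith)]

theorem a_alt {q : ℝ} (h0 : 0 < q) (h1 : q < 1) : HasSum (fun n => (-1) ^ n * (a q (n + 1) + a q n)) (1 / 2) := by
  have ha := a_summable h0 h1
  have ha' := (summable_nat_add_iff 1).2 ha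
  have hs : Summable fun n : ℕ => (-1 : ℝ) ^ n * (a q (n + 1) + a q n) := by
    apply Summable.of_norm
    simp only [norm_mul, norm_pow, norm_neg, norm_one, one_pow, one_mul]
    exact (ha'.add ha).norm
  have hpart : ∀ N, ∑ n ∈ Finset.range N, (-1 : ℝ) ^ n * (a q (n + 1) + a q n)
      = 1 / 2 - (-1) ^ N * a q N := by
    intro N
    induction N with
    | zero => simp [a]; norm_num
    | succ N ih => rw [Finset.sum_range_succ, ih, pow_succ]; ring
  rw [hs.hasSum_iff_tendsto_nat]
  simp only [hpart]
  have : Filter.Tendsto (fun N : ℕ => (-1 : ℝ) ^ N * a q N) Filter.atTop (nhds 0) := by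
    apply squeeze_zero_norm (a := fun N => a q N)
    · intro N
      simp only [norm_mul, norm_pow, norm_neg, norm_one, one_pow, one_mul]
      rw [Real.norm_of_nonneg (a_nonneg h0 N)]
    · exact ha.tendsto_atTop_zero
  simpa using tendsto_const_nhds.sub this

theorem g_tendsto {q : ℝ} (h0 : 0 < q) (h1 : q < 1) (y : ℝ) (hy : |y| ≤ 1) (L : ℝ) (hL : Filter.Tendsto (U q) Filter.atTop (nhds L))
    (hUL : ∀ k, U q k ≤ L) :
    Filter.Tendsto (fun N => g q y (N + 1)) Filter.atTop
      (nhds (L * L * (4 * ∑' n, (-1) ^ n * c q y n + 1))) := by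
  have hL0 : 0 < L := lt_of_lt_of_le (U_pos h0 h1 0) (hUL 0)
  have hval : ∑' n, (-1) ^ n * (L * L) * D q y n = L * L * (4 * ∑' n, (-1) ^ n * c q y n + 1) := by
    have hc : Summable fun n : ℕ => (-1 : ℝ) ^ n * c q y n := by
      apply Summable.of_norm
      simp only [norm_mul, norm_pow, norm_neg, norm_one, one_pow, one_mul]
      exact c_summable h0 h1 y hy
    have := ((hc.hasSum.mul_left 4).add ((a_alt h0 h1).mul_left 2)).mul_left (L * L)
    rw [show (2 : ℝ) * (1 / 2) = 1 by norm_num] at this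
    rw [← this.tsum_eq]
    congr 1; ext n; unfold D; ring
  rw [← hval]
  have hg : ∀ N, g q y (N + 1) = ∑' n, if n ≤ N then
      (-1) ^ n * (U q (N - n) * U q (N + 1 + n)) * D q y n else 0 := by
    intro N
    rw [g_eq h0 h1 y hy N, tsum_eq_sum (s := Finset.range (N + 1))]
    · refine Finset.sum_congr rfl fun n hn => ?_
      rw [if_pos (by simpa [Nat.lt_succ_iff] using hn)]
    · intro n hn
      rw [if_neg (by simpa [Nat.lt_succ_iff] using hn)]
  simp only [hg]
  refine tendsto_tsum_of_dominated_convergence (bound := fun n => L * L * |D q y n|)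
    ((D_summable h0 h1 y hy).mul_left _) ?_ ?_
  · intro n
    have t1 : Filter.Tendsto (fun N => U q (N - n)) Filter.atTop (nhds L) :=
      hL.comp (Filter.tendsto_sub_atTop_nat n)
    have t2 : Filter.Tendsto (fun N => U q (N + 1 + n)) Filter.atTop (nhds L) := by
      have := hL.comp (Filter.tendsto_add_atTop_nat (1 + n))
      simpa [Function.comp_def, add_assoc] using this
    have t3 := ((t1.mul t2).const_mul ((-1 : ℝ) ^ n)).mul_const (D q y n)
    refine t3.congr' ?_
    filter_upwards [Filter.eventually_ge_atTop n] with N hN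
    rw [if_pos hN]
  · refine Filter.Eventually.of_forall fun N n => ?_
    split_ifs with h
    · simp only [norm_mul, norm_pow, norm_neg, norm_one, one_pow, one_mul]
      rw [Real.norm_of_nonneg (U_pos h0 h1 _).le, Real.norm_of_nonneg (U_pos h0 h1 _).le]
      rw [Real.norm_eq_abs]
      have := hUL (N - n)
      have := hUL (N + 1 + n)
      have := (U_pos h0 h1 (N + 1 + n)).le
      gcongr
    · simp; positivity


theorem poisson_sum (ρ x : ℝ) (h0 : 0 < ρ) (h1 : ρ < 1) :
    HasSum (fun j : ℕ => ρ ^ (j + 1) * Real.cos ((j + 1 : ℝ) * x))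
      (ρ * (Real.cos x - ρ) / (1 - 2 * ρ * Real.cos x + ρ ^ 2)) := by
  set w : ℂ := ρ * Complex.exp (x * Complex.I) with hw
  have hn : ‖w‖ < 1 := by
    rw [hw, norm_mul, Complex.norm_exp_ofReal_mul_I]
    simpa [abs_of_pos h0] using h1
  have hs := (hasSum_geometric_of_norm_lt_one hn).mul_left w
  have hr := Complex.hasSum_re hs
  convert hr using 1
  · ext j
    rw [← pow_succ', hw, mul_pow, ← Complex.exp_nat_mul]
    have : ((j + 1 : ℕ) : ℂ) * (x * Complex.I) = (((j + 1 : ℝ) * x : ℝ) : ℂ) * Complex.I := by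
      push_cast; ring
    rw [this, ← Complex.ofReal_pow, Complex.re_ofReal_mul, Complex.exp_ofReal_mul_I_re]
  · have hre : w.re = ρ * Real.cos x := by
      rw [hw, Complex.re_ofReal_mul, Complex.exp_ofReal_mul_I_re]
    have him : w.im = ρ * Real.sin x := by
      rw [hw, Complex.im_ofReal_mul, Complex.exp_ofReal_mul_I_im]
    have hN : Complex.normSq (1 - w) = 1 - 2 * ρ * Real.cos x + ρ ^ 2 := by
      rw [Complex.normSq_apply]
      simp only [Complex.sub_re, Complex.sub_im, Complex.one_re, Complex.one_im, hre, him]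
      linear_combination ρ ^ 2 * Real.sin_sq_add_cos_sq x
    rw [Complex.mul_re, Complex.inv_re, Complex.inv_im, hN]
    simp only [Complex.sub_re, Complex.sub_im, Complex.one_re, Complex.one_im, hre, him]
    have hne : Complex.normSq (1 - w) ≠ 0 := by
      rw [hN]
      nlinarith [Real.cos_le_one x, sq_pos_of_pos (sub_pos.2 h1)]
    rw [← hN]
    field_simp
    linear_combination (ρ ) * Real.sin_sq_add_cos_sq x


theorem kernel_eq {q : ℝ} (h0 : 0 < q) (h1 : q < 1) (x : ℝ) :
    heatPoissonKernel q x = 1 / 2 + 2 * ∑' n, (-1) ^ n * c q (Real.cos x) n := by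
  unfold heatPoissonKernel
  congr 2
  let f : ℕ × ℕ → ℝ := fun p => (-1) ^ p.1 * (r q p.1 ^ (p.2 + 1) * Real.cos ((p.2 + 1 : ℝ) * x))
  have hf : Summable f := by
    have hg := summable_geometric_of_lt_one h0.le h1
    have hgg := hg.mul_of_nonneg hg (fun _ => by positivity) (fun _ => by positivity)
    refine Summable.of_norm_bounded hgg ?_
    rintro ⟨k, j⟩
    simp only [f, norm_mul, norm_pow, norm_neg, norm_one, one_pow, one_mul]
    rw [Real.norm_of_nonneg (r_pos h0 k).le]
    refine (mul_le_of_le_one_right (pow_nonneg (r_pos h0 k).le _) (Real.abs_cos_le_one _)).trans ?_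
    unfold r
    rw [← pow_mul, ← pow_add]
    apply pow_le_pow_of_le_one h0.le h1.le
    nlinarith
  have hcomm := hf.tsum_comm' (f := fun k j => f (k, j)) (fun k => hf.prod_factor k)
    (fun j => (hf.prod_symm).prod_factor j)
  have e1 : ∀ k, ∑' j, f (k, j) = (-1) ^ k * c q (Real.cos x) k := fun k =>
    ((poisson_sum (r q k) x (r_pos h0 k) (r_lt h0 h1 k)).mul_left ((-1) ^ k)).tsum_eq
  have e2 : ∀ j : ℕ, ∑' k, f (k, j) = Real.cos ((j + 1 : ℝ) * x) / (q ^ (j + 1) + q⁻¹ ^ (j + 1)) := by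
    intro j
    have hlt : |-(q ^ (2 * (j + 1)))| < 1 := by
      rw [abs_neg, abs_of_pos (by positivity)]
      exact pow_lt_one₀ h0.le h1 (by omega)
    have := (hasSum_geometric_of_abs_lt_one hlt).mul_left
      (q ^ (j + 1) * Real.cos ((j + 1 : ℝ) * x))
    have hv : q ^ (j + 1) * Real.cos ((j + 1 : ℝ) * x) * (1 - -q ^ (2 * (j + 1)))⁻¹
      = Real.cos ((j + 1 : ℝ) * x) / (q ^ (j + 1) + q⁻¹ ^ (j + 1)) := by
      rw [pow_mul', inv_pow]
      have : 0 < q ^ (j + 1) := by positivity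
      generalize q ^ (j + 1) = z at *
      have n1 : 1 - - z ^ 2 ≠ 0 := by nlinarith
      have n2 : z + z⁻¹ = (1 - -z ^ 2) / z := by field_simp; ring
      rw [n2]
      field_simp
    rw [← hv, ← this.tsum_eq]
    congr 1; ext k
    simp only [f]
    unfold r
    rw [← neg_one_mul (q ^ (2 * (j + 1))), mul_pow, ← pow_mul, ← pow_mul]
    rw [show (2 * k + 1) * (j + 1) = (j + 1) + 2 * (j + 1) * k by ring, pow_add]
    ring
  simp only [e1, e2] at hcomm
  exact hcomm

theorem log_ineq {q : ℝ} (h0 : 0 < q) (h1 : q < 1) (t : ℝ) (ht : 0 < t) (ht1 : t ≤ 1) :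
    ((1 - q) / (1 + q)) ^ t ≤ (1 - q * t) / (1 + q * t) := by
  have hqt : q * t ≤ q := by nlinarith
  have hqt0 : 0 < q * t := by positivity
  have s1 := Real.hasSum_log_sub_log_of_abs_lt_one (x := q) (by rw [abs_of_pos h0]; exact h1)
  have s2 := Real.hasSum_log_sub_log_of_abs_lt_one (x := q * t)
    (by rw [abs_of_pos hqt0]; linarith)
  have hle := hasSum_le (fun k => ?_) s2 (s1.mul_left t)
  · rw [← Real.log_le_log_iff (Real.rpow_pos_of_pos (div_pos (by linarith) (by linarith)) _)
      (div_pos (by linarith) (by linarith)), Real.log_rpow (div_pos (by linarith) (by linarith)),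
      Real.log_div (by linarith) (by linarith), Real.log_div (by linarith) (by linarith)]
    linarith
  · have : t ^ (2 * k + 1) ≤ t := by
      calc t ^ (2 * k + 1) ≤ t ^ 1 := pow_le_pow_of_le_one ht.le ht1 (by omega)
        _ = t := pow_one t
    rw [mul_pow]
    have h5 : 0 ≤ 2 * (1 / (2 * (k : ℝ) + 1)) * q ^ (2 * k + 1) := by positivity
    nlinarith

theorem fac_pos {q : ℝ} (h0 : 0 < q) (h1 : q < 1) (y : ℝ) (hy : |y| ≤ 1) (n : ℕ) : 0 < (b q n + y) / (b q n - y) := by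
  have hy' := (abs_le.1 hy)
  have := b_gt h0 h1 n
  exact div_pos (by linarith) (by linarith)

theorem fac_ineq {q : ℝ} (h0 : 0 < q) (h1 : q < 1) (y : ℝ) (hy : |y| ≤ 1) (n : ℕ) :
    (b q n + 1) / (b q n - 1) * ((1 - q) / (1 + q)) ^ (4 * (q ^ 2) ^ n)
      ≤ (b q n + y) / (b q n - y) := by
  have hy' := (abs_le.1 hy)
  have hb := b_gt h0 h1 n
  have hl := log_ineq h0 h1 ((q ^ 2) ^ n) (by positivity)
    (pow_le_one₀ (by positivity) (sq_lt h0 h1).le)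
  have hr : q * (q ^ 2) ^ n = r q n := by unfold r; rw [← pow_mul]; ring
  rw [hr] at hl
  have p0 := r_pos h0 n
  have p1 := r_lt h0 h1 n
  have hpos : 0 < (1 - q) / (1 + q) := div_pos (by linarith) (by linarith)
  have h4 : ((1 - q) / (1 + q)) ^ (4 * (q ^ 2) ^ n) ≤ ((1 - r q n) / (1 + r q n)) ^ 4 := by
    rw [mul_comm, Real.rpow_mul hpos.le]
    have := pow_le_pow_left₀ (Real.rpow_nonneg hpos.le _) hl 4
    rwa [← Real.rpow_natCast _ 4] at this
  have e1 : (b q n + 1) / (b q n - 1) = ((1 + r q n) / (1 - r q n)) ^ 2 := by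
    have n1 : b q n - 1 ≠ 0 := by linarith
    have n2 : 1 - r q n ≠ 0 := by linarith
    rw [div_pow, div_eq_div_iff n1 (by positivity)]
    unfold b
    field_simp
    ring
  have e2 : (b q n + 1) / (b q n - 1) * ((1 - r q n) / (1 + r q n)) ^ 4
      = (b q n - 1) / (b q n + 1) := by
    have : (b q n - 1) / (b q n + 1) = (((1 + r q n) / (1 - r q n)) ^ 2)⁻¹ := by
      rw [← e1, inv_div]
    rw [this, e1]
    have n2 : 1 - r q n ≠ 0 := by linarith
    field_simp
  calc _ ≤ (b q n + 1) / (b q n - 1) * ((1 - r q n) / (1 + r q n)) ^ 4 := by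
        have : 0 < (b q n + 1) / (b q n - 1) := div_pos (by linarith) (by linarith)
        gcongr
    _ = (b q n - 1) / (b q n + 1) := e2
    _ ≤ _ := by
        rw [div_le_div_iff₀ (by linarith) (by linarith)]
        nlinarith

theorem g_ineq {q : ℝ} (h0 : 0 < q) (h1 : q < 1) (y : ℝ) (hy : |y| ≤ 1) (N : ℕ) :
    g q 1 N * ((1 - q) / (1 + q)) ^ ((4 : ℝ) / (1 - q ^ 2)) ≤ g q y N := by
  have hpos : 0 < (1 - q) / (1 + q) := div_pos (by linarith) (by linarith)
  have hle1 : (1 - q) / (1 + q) ≤ 1 := by rw [div_le_one (by linarith)]; linarith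
  have hg1 : 0 < g q 1 N := Finset.prod_pos fun n _ => fac_pos h0 h1 1 (by simp) n
  have hexp : ((1 - q) / (1 + q)) ^ ((4 : ℝ) / (1 - q ^ 2))
      ≤ ((1 - q) / (1 + q)) ^ (∑ n ∈ Finset.range N, 4 * (q ^ 2) ^ n) := by
    apply Real.rpow_le_rpow_of_exponent_ge hpos hle1
    have := (hasSum_geometric_of_lt_one (sq_nonneg q) (sq_lt h0 h1)).mul_left 4
    rw [← div_eq_mul_inv] at this
    exact sum_le_hasSum _ (fun _ _ => by positivity) this
  refine (mul_le_mul_of_nonneg_left hexp hg1.le).trans ?_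
  rw [Real.rpow_sum_of_pos hpos]
  unfold g
  rw [← Finset.prod_mul_distrib]
  apply Finset.prod_le_prod
  · intro n _
    exact mul_nonneg (fac_pos h0 h1 1 (by simp) n).le (Real.rpow_nonneg hpos.le _)
  · intro n _
    exact fac_ineq h0 h1 y hy n

theorem kernel_ineq {q : ℝ} (h0 : 0 < q) (h1 : q < 1) (x : ℝ) :
    heatPoissonKernel q 0 * ((1 - q) / (1 + q)) ^ ((4 : ℝ) / (1 - q ^ 2))
      ≤ heatPoissonKernel q x := by
  obtain ⟨L, hL0, hL, hUL⟩ := U_lim h0 h1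
  have hx := g_tendsto h0 h1 (Real.cos x) (Real.abs_cos_le_one x) L hL hUL
  have h1' := g_tendsto h0 h1 1 (by simp) L hL hUL
  have hlim := le_of_tendsto_of_tendsto' (h1'.mul_const _) hx
    (fun N => g_ineq h0 h1 (Real.cos x) (Real.abs_cos_le_one x) (N + 1))
  rw [kernel_eq h0 h1 x, kernel_eq h0 h1 0, Real.cos_zero]
  have hLL : 0 < 2 * (L * L) := by positivity
  refine le_of_mul_le_mul_left ?_ hLL
  linarith

theorem kernel_zero {q : ℝ} (h0 : 0 < q) (h1 : q < 1) :
    1 / 2 + 2 * q / ((1 + q ^ 2) * (1 - q)) < heatPoissonKernel q 0 := by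
  unfold heatPoissonKernel
  have hg := (hasSum_geometric_of_lt_one h0.le h1).mul_left (q / (1 + q ^ 2))
  have key : ∀ j : ℕ, q / (1 + q ^ 2) * q ^ j = q ^ (j + 1) / (1 + q ^ 2) := fun j => by ring
  have hterm : ∀ j : ℕ, Real.cos ((j + 1 : ℝ) * 0) / (q ^ (j + 1) + q⁻¹ ^ (j + 1))
      = q ^ (j + 1) / (1 + q ^ (2 * (j + 1))) := by
    intro j
    rw [mul_zero, Real.cos_zero, pow_mul', inv_pow]
    have : 0 < q ^ (j + 1) := by positivity
    generalize q ^ (j + 1) = z at *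
    field_simp
    ring
  simp only [hterm]
  have hs : Summable fun j : ℕ => q ^ (j + 1) / (1 + q ^ (2 * (j + 1))) := by
    refine Summable.of_nonneg_of_le (fun _ => by positivity) (fun j => ?_)
      ((summable_nat_add_iff 1).2 (summable_geometric_of_lt_one h0.le h1))
    apply div_le_self (by positivity)
    have : 0 < q ^ (2 * (j + 1)) := by positivity
    linarith
  have hlt : ∑' j : ℕ, q / (1 + q ^ 2) * q ^ j < ∑' j : ℕ, q ^ (j + 1) / (1 + q ^ (2 * (j + 1))) := by
    refine Summable.tsum_lt_tsum (i := 1) (fun j => ?_) ?_ hg.summable hs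
    · rw [key]
      have : q ^ (2 * (j + 1)) ≤ q ^ 2 := pow_le_pow_of_le_one h0.le h1.le (by omega)
      gcongr
    · rw [key]
      have : q ^ (2 * (1 + 1)) < q ^ 2 := pow_lt_pow_right_of_lt_one₀ h0 h1 (by norm_num)
      gcongr
  rw [hg.tsum_eq] at hlt
  have e : 2 * q / ((1 + q ^ 2) * (1 - q)) = 2 * (q / (1 + q ^ 2) * (1 - q)⁻¹) := by
    have : 1 - q ≠ 0 := by linarith
    field_simp
  rw [e]
  linarith

end HPK

theorem heatPoissonKernel_lower_bound (q : ℝ) (hq : q ∈ Set.Ioo (0 : ℝ) 1) (x : ℝ) :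
    heatPoissonKernel q x >
      (1 / 2 + 2 * q / ((1 + q ^ 2) * (1 - q))) *
        ((1 - q) / (1 + q)) ^ ((4 : ℝ) / (1 - q ^ 2)) := by
  obtain ⟨h0, h1⟩ := hq
  have hpos : 0 < (1 - q) / (1 + q) := div_pos (by linarith) (by linarith)
  exact lt_of_lt_of_le (mul_lt_mul_of_pos_right (HPK.kernel_zero h0 h1)
    (Real.rpow_pos_of_pos hpos _)) (HPK.kernel_ineq h0 h1 x)
end

section
/- Let q ∈ (0,1), n a positive integer, β ∈ [0,2). Then the equation Σ_{ν=0}^∞ q^{(2ν+1)n}·cos((2ν+1)θπ − βπ/2) = 0 has exactly one root θ_n in the interval [0,1), and it is given by θ_n = 1 − ⌊β⌋ − (1/π)·arcsin((1 − q^{2n})·cos(βπ/2) / √(1 − 2q^{2n}·cos(βπ) + q^{4n})). -/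
open Real

lemma aux_sum (r x b : ℝ) (h0 : 0 < r) (h1 : r < 1) :
    (∑' ν : ℕ, r ^ (2 * ν + 1) * Real.cos ((2 * (ν : ℝ) + 1) * x - b)) = 0 ↔
      (1 - r ^ 2) * Real.cos b * Real.cos x + (1 + r ^ 2) * Real.sin b * Real.sin x = 0 := by
  set z : ℂ := ((r ^ 2 : ℝ) : ℂ) * Complex.exp (((2 * x : ℝ) : ℂ) * Complex.I) with hz
  set w : ℂ := (r : ℂ) * Complex.exp (((x - b : ℝ) : ℂ) * Complex.I) with hw
  have hr2 : r ^ 2 < 1 := by nlinarith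
  have hzn : ‖z‖ < 1 := by
    rw [hz, norm_mul, Complex.norm_exp_ofReal_mul_I, Complex.norm_real, Real.norm_eq_abs,
      abs_of_pos (by positivity)]
    linarith
  have hs := Complex.hasSum_re ((hasSum_geometric_of_norm_lt_one hzn).mul_left w)
  have hterm : ∀ ν : ℕ, (w * z ^ ν).re =
      r ^ (2 * ν + 1) * Real.cos ((2 * (ν : ℝ) + 1) * x - b) := by
    intro ν
    have : w * z ^ ν = ((r ^ (2 * ν + 1) : ℝ) : ℂ) *
        Complex.exp ((((2 * (ν : ℝ) + 1) * x - b : ℝ) : ℂ) * Complex.I) := by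
      rw [hz, hw, mul_pow, ← Complex.exp_nat_mul]
      have : (((2 * (ν : ℝ) + 1) * x - b : ℝ) : ℂ) * Complex.I =
        ((x - b : ℝ) : ℂ) * Complex.I + ν * (((2 * x : ℝ) : ℂ) * Complex.I) := by
        push_cast; ring
      rw [this, Complex.exp_add]
      push_cast
      ring
    rw [this, Complex.re_ofReal_mul, Complex.exp_ofReal_mul_I_re]
  simp only [hterm] at hs
  rw [hs.tsum_eq]
  have hne : (1 - z) ≠ 0 := by
    intro h
    have : z = 1 := (sub_eq_zero.mp h).symm
    rw [this] at hzn
    simp at hzn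
  have hN : 0 < Complex.normSq (1 - z) := Complex.normSq_pos.mpr hne
  have hzre : z.re = r ^ 2 * Real.cos (2 * x) := by
    rw [hz, Complex.re_ofReal_mul, Complex.exp_ofReal_mul_I_re]
  have hzim : z.im = r ^ 2 * Real.sin (2 * x) := by
    rw [hz, Complex.im_ofReal_mul, Complex.exp_ofReal_mul_I_im]
  have hwre : w.re = r * Real.cos (x - b) := by
    rw [hw, Complex.re_ofReal_mul, Complex.exp_ofReal_mul_I_re]
  have hwim : w.im = r * Real.sin (x - b) := by
    rw [hw, Complex.im_ofReal_mul, Complex.exp_ofReal_mul_I_im]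
  have key : (w * (1 - z)⁻¹).re = r * ((1 - r ^ 2) * Real.cos b * Real.cos x +
      (1 + r ^ 2) * Real.sin b * Real.sin x) / Complex.normSq (1 - z) := by
    rw [Complex.mul_re, Complex.inv_re, Complex.inv_im, Complex.sub_re, Complex.sub_im,
      Complex.one_re, Complex.one_im, hzre, hzim, hwre, hwim]
    field_simp
    rw [mul_comm x 2, Real.cos_sub, Real.sin_sub, Real.cos_two_mul, Real.sin_two_mul]
    have := Real.sin_sq_add_cos_sq x
    have h2 : Real.sin x ^ 2 = 1 - Real.cos x ^ 2 := by linarith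
    ring_nf
    rw [h2]
    ring
  rw [key, div_eq_zero_iff, mul_eq_zero]
  constructor
  · rintro ((h | h) | h)
    · exact absurd h h0.ne'
    · exact h
    · exact absurd h hN.ne'
  · intro h; exact Or.inl (Or.inr h)

theorem root_theta_unique_and_explicit (q β : ℝ) (hq : q ∈ Set.Ioo (0 : ℝ) 1)
    (n : ℕ) (hn : 0 < n) (hβ : β ∈ Set.Ico (0 : ℝ) 2) :
    (1 - (⌊β⌋ : ℝ) - (1 / π) * Real.arcsin ((1 - q ^ (2 * n)) * Real.cos (β * π / 2) /
        Real.sqrt (1 - 2 * q ^ (2 * n) * Real.cos (β * π) + q ^ (4 * n))))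
      ∈ Set.Ico (0 : ℝ) 1 ∧
    ∀ θ ∈ Set.Ico (0 : ℝ) 1,
      ((∑' ν : ℕ, q ^ ((2 * ν + 1) * n) *
          Real.cos ((2 * (ν : ℝ) + 1) * θ * π - β * π / 2)) = 0 ↔
        θ = 1 - (⌊β⌋ : ℝ) - (1 / π) * Real.arcsin ((1 - q ^ (2 * n)) * Real.cos (β * π / 2) /
          Real.sqrt (1 - 2 * q ^ (2 * n) * Real.cos (β * π) + q ^ (4 * n)))) := by
  obtain ⟨hq0, hq1⟩ := hq
  obtain ⟨hβ0, hβ2⟩ := hβ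
  have hπ := Real.pi_pos
  set r := q ^ n with hr
  have h0 : 0 < r := by positivity
  have h1 : r < 1 := pow_lt_one₀ hq0.le hq1 hn.ne'
  have e2 : q ^ (2 * n) = r ^ 2 := by rw [hr, ← pow_mul, mul_comm]
  have e4 : q ^ (4 * n) = r ^ 4 := by rw [hr, ← pow_mul, mul_comm]
  have eν : ∀ ν : ℕ, q ^ ((2 * ν + 1) * n) = r ^ (2 * ν + 1) := by
    intro ν; rw [hr, ← pow_mul, mul_comm]
  have hr2 : r ^ 2 < 1 := by nlinarith
  set b := β * π / 2 with hb
  have hbπ : β * π = 2 * b := by rw [hb]; ring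
  have eθ : ∀ θ : ℝ, ∀ ν : ℕ, (2 * (ν : ℝ) + 1) * θ * π - b = (2 * (ν : ℝ) + 1) * (θ * π) - b := by
    intros; ring
  simp only [e2, e4, eν, hbπ, eθ]
  set D := 1 - 2 * r ^ 2 * Real.cos (2 * b) + r ^ 4 with hD
  have hDeq : D = ((1 - r ^ 2) * Real.cos b) ^ 2 + ((1 + r ^ 2) * Real.sin b) ^ 2 := by
    rw [hD, Real.cos_two_mul, mul_pow, mul_pow, Real.sin_sq]; ring
  have hDpos : 0 < D := by
    have : D = (1 - r ^ 2) ^ 2 + 2 * r ^ 2 * (1 - Real.cos (2 * b)) := by rw [hD]; ring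
    have h3 := Real.cos_le_one (2 * b)
    have h4 : 0 < (1 - r ^ 2) ^ 2 := by apply pow_pos; linarith
    have h5 : 0 ≤ 2 * r ^ 2 * (1 - Real.cos (2 * b)) := by
      apply mul_nonneg (by positivity); linarith
    linarith
  have hR : 0 < √D := Real.sqrt_pos.mpr hDpos
  have hRsq : √D ^ 2 = D := Real.sq_sqrt hDpos.le
  have hb0 : 0 ≤ b := by positivity
  have hb1 : b ≤ π := by rw [hb]; nlinarith
  have hsin : 0 ≤ Real.sin b := Real.sin_nonneg_of_nonneg_of_le_pi hb0 hb1
  set s := (1 - r ^ 2) * Real.cos b / √D with hs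
  set c := (1 + r ^ 2) * Real.sin b / √D with hc
  have hc0 : 0 ≤ c := by positivity
  have hsc : s ^ 2 + c ^ 2 = 1 := by
    rw [hs, hc, div_pow, div_pow, hRsq, ← add_div, ← hDeq, div_self hDpos.ne']
  have hs1 : s ≤ 1 := by nlinarith
  have hs2 : -1 ≤ s := by nlinarith
  have hsφ : Real.sin (Real.arcsin s) = s := Real.sin_arcsin hs2 hs1
  have hcφ : Real.cos (Real.arcsin s) = c := by
    rw [Real.cos_arcsin, show 1 - s ^ 2 = c ^ 2 by linarith, Real.sqrt_sq hc0]
  have hmem : (1 - (⌊β⌋ : ℝ) - (1 / π) * Real.arcsin s) ∈ Set.Ico (0 : ℝ) 1 := by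
    have hu : 1 / π * Real.arcsin s ≤ 1 / 2 := by
      have := Real.arcsin_le_pi_div_two s
      rw [one_div, inv_mul_le_iff₀ hπ]; linarith
    have hl : -(1 / 2) ≤ 1 / π * Real.arcsin s := by
      have := Real.neg_pi_div_two_le_arcsin s
      rw [one_div π, le_inv_mul_iff₀ hπ]; linarith
    by_cases h : β < 1
    · have hf : ⌊β⌋ = 0 := Int.floor_eq_zero_iff.mpr ⟨hβ0, h⟩
      have hcos : 0 < Real.cos b := by
        apply Real.cos_pos_of_mem_Ioo
        constructor
        · linarith
        · rw [hb]; nlinarith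
      have hspos : 0 < s := div_pos (mul_pos (by linarith) hcos) hR
      have hφ : 0 < 1 / π * Real.arcsin s :=
        mul_pos (by positivity) (Real.arcsin_pos.mpr hspos)
      rw [hf]; push_cast
      constructor <;> linarith
    · push Not at h
      have hf : ⌊β⌋ = 1 := Int.floor_eq_iff.mpr ⟨by simpa using h, by push_cast; linarith⟩
      have hcos : Real.cos b ≤ 0 := by
        apply Real.cos_nonpos_of_pi_div_two_le_of_le
        · rw [hb]; nlinarith
        · linarith
      have hsneg : s ≤ 0 :=
        div_nonpos_of_nonpos_of_nonneg (mul_nonpos_of_nonneg_of_nonpos (by linarith) hcos) hR.le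
      have hφ : 1 / π * Real.arcsin s ≤ 0 :=
        mul_nonpos_of_nonneg_of_nonpos (by positivity) (Real.arcsin_nonpos.mpr hsneg)
      rw [hf]; push_cast
      constructor <;> linarith
  refine ⟨hmem, ?_⟩
  intro θ hθ
  rw [aux_sum r (θ * π) b h0 h1]
  have hS : (1 - r ^ 2) * Real.cos b * Real.cos (θ * π) +
      (1 + r ^ 2) * Real.sin b * Real.sin (θ * π) = √D * Real.sin (θ * π + Real.arcsin s) := by
    rw [Real.sin_add, hsφ, hcφ, hs, hc]
    field_simp
    ring
  rw [hS, mul_eq_zero, or_iff_right hR.ne', Real.sin_eq_zero_iff]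
  constructor
  · rintro ⟨k, hk⟩
    have hθk : θ = k - 1 / π * Real.arcsin s := by
      field_simp
      linarith
    have hA := hmem.1
    have hB := hmem.2
    have hC := hθ.1
    have hE := hθ.2
    rw [hθk] at hC hE
    have i1 : (k : ℝ) < ((1 - ⌊β⌋ + 1 : ℤ) : ℝ) := by push_cast; linarith
    have i2 : ((1 - ⌊β⌋ : ℤ) : ℝ) < ((k + 1 : ℤ) : ℝ) := by push_cast; linarith
    have i3 := Int.cast_lt.mp i1
    have i4 := Int.cast_lt.mp i2
    have : k = 1 - ⌊β⌋ := by omega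
    rw [hθk, this]; push_cast; ring
  · intro h
    refine ⟨1 - ⌊β⌋, ?_⟩
    rw [h]; push_cast
    field_simp
    ring
end

section
/- Let q ∈ (0,1), n a positive integer, and x ∈ ℝ. If Σ_{ν=0}^∞ q^{(2ν+1)n}·cos((2ν+1)x) = 0, then |cos x| ≤ q^{2n}/(1 − q^{2n}); consequently also 0 ≤ 1 − |sin x| ≤ q^{2n}/(1 − q^{2n}). -/
open Real

theorem cos_bound_at_root (q : ℝ) (hq : q ∈ Set.Ioo (0 : ℝ) 1) (n : ℕ) (hn : 0 < n) (x : ℝ)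
    (hroot : ∑' ν : ℕ, q ^ ((2 * ν + 1) * n) * Real.cos ((2 * (ν : ℝ) + 1) * x) = 0) :
    |Real.cos x| ≤ q ^ (2 * n) / (1 - q ^ (2 * n)) ∧
      0 ≤ 1 - |Real.sin x| ∧ 1 - |Real.sin x| ≤ q ^ (2 * n) / (1 - q ^ (2 * n)) := by
  obtain ⟨hq0, hq1⟩ := hq
  have hc : |Real.cos x| ≤ q ^ (2 * n) / (1 - q ^ (2 * n)) := by
    set s := q ^ (2 * n) with hs
    have hs0 : 0 < s := by positivity
    have hs1 : s < 1 := pow_lt_one₀ hq0.le hq1 (by omega)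
    have hr0 : 0 < q ^ n := by positivity
    have hterm : ∀ ν : ℕ, q ^ ((2 * ν + 1) * n) = q ^ n * s ^ ν := by
      intro ν
      rw [hs, ← pow_mul, ← pow_add]
      congr 1
      ring
    have hroot2 : ∑' ν : ℕ, s ^ ν * Real.cos ((2 * (ν : ℝ) + 1) * x) = 0 := by
      simp only [hterm, mul_assoc, tsum_mul_left] at hroot
      exact (mul_eq_zero.mp hroot).resolve_left hr0.ne'
    have hb : ∀ ν : ℕ, ‖s ^ ν * Real.cos ((2 * (ν : ℝ) + 1) * x)‖ ≤ s ^ ν := by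
      intro ν
      rw [norm_mul, Real.norm_eq_abs, Real.norm_eq_abs, abs_of_pos (by positivity)]
      exact mul_le_of_le_one_right (by positivity) (Real.abs_cos_le_one _)
    have hg := hasSum_geometric_of_lt_one hs0.le hs1
    have hsum := Summable.of_norm_bounded hg.summable hb
    rw [hsum.tsum_eq_zero_add] at hroot2
    have hg' : HasSum (fun ν : ℕ => s ^ (ν + 1)) (s / (1 - s)) := by
      simpa [pow_succ', div_eq_mul_inv] using hg.mul_left s
    have ht := tsum_of_norm_bounded hg' (fun ν => hb (ν + 1))
    rw [Real.norm_eq_abs] at ht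
    have h0 : Real.cos x = -∑' ν : ℕ, s ^ (ν + 1) * Real.cos ((2 * ((ν + 1 : ℕ) : ℝ) + 1) * x) := by
      simp only [pow_zero, Nat.cast_zero, mul_zero, zero_add, one_mul] at hroot2
      linarith
    rw [h0, abs_neg]
    exact ht
  refine ⟨hc, by linarith [Real.abs_sin_le_one x], le_trans ?_ hc⟩
  have h1 := Real.sin_sq_add_cos_sq x
  rw [← sq_abs (Real.sin x), ← sq_abs (Real.cos x)] at h1
  nlinarith [abs_nonneg (Real.sin x), abs_nonneg (Real.cos x), Real.abs_sin_le_one x,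
    Real.abs_cos_le_one x]
end

section
/- Let q ∈ (0,1), β ∈ [0,2), n a positive integer, let θ_n be the unique root on [0,1) of Σ_{ν=0}^∞ q^{(2ν+1)n}·cos((2ν+1)θπ − βπ/2) = 0, set y_0 = θ_n π/n, and let s ∈ {0,1} be such that (−1)^s = sgn sin(n y_0 − βπ/2). Define r_0(y_0) = r_0^{(1)}(y_0) + r_0^{(3)}(y_0), where r_0^{(1)}(y_0) = 2·Σ_{m=2}^∞ (q^{(2m−1)n}/((2m−1)n))·cos((2m−1)n y_0 − (β+1)π/2) and r_0^{(3)}(y_0) = (−1)^s·2·(q^n/n)·(|sin(n y_0 − βπ/2)| − 1). Then |r_0(y_0)| ≤ (8/(3n))·q^{3n}/(1 − q^{2n}). -/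
open Real

lemma geo_aux (x : ℝ) (hx0 : 0 < x) (hx1 : x < 1) :
    HasSum (fun m : ℕ => x ^ (2 * m + 3)) (x ^ 3 / (1 - x ^ 2)) := by
  have h2 : x ^ 2 < 1 := by nlinarith
  have h := (hasSum_geometric_of_lt_one (sq_nonneg x) h2).mul_left (x ^ 3)
  have e : (fun m : ℕ => x ^ (2 * m + 3)) = fun m : ℕ => x ^ 3 * (x ^ 2) ^ m := by
    funext m
    rw [← pow_mul, pow_add, mul_comm]
  rw [e, div_eq_mul_inv]
  exact h

lemma tsum_aux (f : ℕ → ℝ) (c x : ℝ) (hx0 : 0 < x) (hx1 : x < 1)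
    (hf : ∀ m, |f m| ≤ c * x ^ (2 * m + 3)) :
    |∑' m, f m| ≤ c * (x ^ 3 / (1 - x ^ 2)) := by
  have := tsum_of_norm_bounded ((geo_aux x hx0 hx1).mul_left c) (f := f) hf
  simpa using this

theorem r0_bound (q β : ℝ) (hq : q ∈ Set.Ioo (0 : ℝ) 1) (hβ : β ∈ Set.Ico (0 : ℝ) 2)
    (n : ℕ) (hn : 0 < n) (θ : ℝ) (hθ : θ ∈ Set.Ico (0 : ℝ) 1)
    (hroot : ∑' ν : ℕ, q ^ ((2 * ν + 1) * n) *
      Real.cos ((2 * (ν : ℝ) + 1) * θ * π - β * π / 2) = 0)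
    (y₀ : ℝ) (hy₀ : y₀ = θ * π / n)
    (s : ℕ) (hs : s = 0 ∨ s = 1)
    (hsign : ((-1 : ℝ)) ^ s = Real.sign (Real.sin ((n : ℝ) * y₀ - β * π / 2))) :
    |(2 * ∑' m : ℕ, q ^ ((2 * m + 3) * n) / ((2 * (m : ℝ) + 3) * n) *
        Real.cos ((2 * (m : ℝ) + 3) * n * y₀ - (β + 1) * π / 2)) +
      ((-1 : ℝ)) ^ s * 2 * (q ^ n / n) * (|Real.sin ((n : ℝ) * y₀ - β * π / 2)| - 1)| ≤
    (8 / (3 * n)) * (q ^ (3 * n) / (1 - q ^ (2 * n))) := by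
  obtain ⟨hq0, hq1⟩ := hq
  have hnR : (0 : ℝ) < n := by exact_mod_cast hn
  obtain ⟨x, hx⟩ : ∃ x, x = q ^ n := ⟨_, rfl⟩
  have hx0 : 0 < x := hx ▸ pow_pos hq0 n
  have hx1 : x < 1 := hx ▸ pow_lt_one₀ hq0.le hq1 hn.ne'
  have hpow : ∀ k : ℕ, q ^ (k * n) = x ^ k := fun k => by
    rw [hx, ← pow_mul, mul_comm]
  have hny : (n : ℝ) * y₀ = θ * π := by
    rw [hy₀]; field_simp
  simp only [hpow] at hroot ⊢
  rw [hny, ← hx]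
  obtain ⟨K, hK⟩ : ∃ K, K = x ^ 3 / (1 - x ^ 2) := ⟨_, rfl⟩
  have hA : |∑' m : ℕ, x ^ (2 * m + 3) / ((2 * (m : ℝ) + 3) * n) *
        Real.cos ((2 * (m : ℝ) + 3) * n * y₀ - (β + 1) * π / 2)| ≤ 1 / (3 * n) * K := by
    rw [hK]
    apply tsum_aux _ _ _ hx0 hx1
    intro m
    have hp : 0 < x ^ (2 * m + 3) := pow_pos hx0 _
    have hm : (0 : ℝ) ≤ m := Nat.cast_nonneg m
    have hd : (3 : ℝ) * n ≤ (2 * (m : ℝ) + 3) * n := by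
      apply mul_le_mul_of_nonneg_right _ hnR.le
      linarith
    rw [abs_mul, abs_of_pos (by positivity)]
    calc _ ≤ x ^ (2 * m + 3) / ((2 * (m : ℝ) + 3) * n) * 1 := by
          gcongr
          exact Real.abs_cos_le_one _
      _ ≤ x ^ (2 * m + 3) / (3 * n) := by
          rw [mul_one]
          gcongr
      _ = _ := by ring
  have hB : x * |Real.cos (θ * π - β * π / 2)| ≤ K := by
    have hsum : Summable (fun ν : ℕ => x ^ (2 * ν + 1) *
        Real.cos ((2 * (ν : ℝ) + 1) * θ * π - β * π / 2)) := by
      rw [← summable_nat_add_iff 1]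
      apply Summable.of_norm_bounded (geo_aux x hx0 hx1).summable
      intro m
      rw [norm_mul, Real.norm_eq_abs, Real.norm_eq_abs, abs_of_pos (pow_pos hx0 _)]
      exact mul_le_of_le_one_right (pow_pos hx0 _).le (Real.abs_cos_le_one _)
    rw [hsum.tsum_eq_zero_add] at hroot
    have ht := tsum_aux (fun m : ℕ => x ^ (2 * (m + 1) + 1) *
        Real.cos ((2 * ((m + 1 : ℕ) : ℝ) + 1) * θ * π - β * π / 2)) 1 x hx0 hx1 (by
      intro m
      rw [abs_mul, abs_of_pos (pow_pos hx0 _), one_mul]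
      exact mul_le_of_le_one_right (pow_pos hx0 _).le (Real.abs_cos_le_one _))
    have e : x * Real.cos (θ * π - β * π / 2) = -∑' m : ℕ, x ^ (2 * (m + 1) + 1) *
        Real.cos ((2 * ((m + 1 : ℕ) : ℝ) + 1) * θ * π - β * π / 2) := by
      simp at hroot ⊢
      linarith
    rw [← abs_of_pos hx0, ← abs_mul, e, abs_neg, hK]
    simpa using ht
  have hC : 1 - |Real.sin (θ * π - β * π / 2)| ≤ |Real.cos (θ * π - β * π / 2)| := by
    have h1 := Real.sin_sq_add_cos_sq (θ * π - β * π / 2)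
    rw [← sq_abs, ← sq_abs (Real.cos _)] at h1
    nlinarith [abs_nonneg (Real.sin (θ * π - β * π / 2)),
      abs_nonneg (Real.cos (θ * π - β * π / 2)), Real.abs_sin_le_one (θ * π - β * π / 2),
      Real.abs_cos_le_one (θ * π - β * π / 2)]
  have hD : |((-1 : ℝ)) ^ s * 2 * (x / n) * (|Real.sin (θ * π - β * π / 2)| - 1)|
      ≤ 2 / n * K := by
    rw [abs_mul, abs_mul, abs_mul, abs_pow, abs_neg, abs_one, one_pow, one_mul, abs_two,
      abs_of_pos (div_pos hx0 hnR), abs_sub_comm,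
      abs_of_nonneg (sub_nonneg.2 (Real.abs_sin_le_one _))]
    calc _ = 2 / n * (x * (1 - |Real.sin (θ * π - β * π / 2)|)) := by ring
      _ ≤ 2 / n * K := by
        gcongr
        exact (mul_le_mul_of_nonneg_left hC hx0.le).trans hB
  rw [← hK]
  refine (abs_add_le _ _).trans ?_
  rw [abs_mul, abs_two]
  have : 8 / (3 * (n : ℝ)) * K = 2 * (1 / (3 * n) * K) + 2 / n * K := by
    field_simp
    ring
  linarith
end

section
/- Let q ∈ (0, 9/25] and let n ≥ 9 be an integer. Then q^n/(1 − q^{2n}) ≤ 7·q^{√n}/(37·n²). -/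
open Real

theorem aux_pow_bound (n : ℕ) (hn : 9 ≤ n) :
    (3 / 5 : ℝ) ^ (n + 3) * (n : ℝ) ^ 2 ≤ (3 / 5) ^ 12 * 81 := by
  induction n, hn using Nat.le_induction with
  | base => norm_num
  | succ m hm ih =>
    refine le_trans ?_ ih
    have hm' : (9 : ℝ) ≤ m := by exact_mod_cast hm
    have h : (3 / 5 : ℝ) * ((m : ℝ) + 1) ^ 2 ≤ (m : ℝ) ^ 2 := by nlinarith
    have e : (3 / 5 : ℝ) ^ (m + 1 + 3) * ((m + 1 : ℕ) : ℝ) ^ 2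
        = (3 / 5 : ℝ) ^ (m + 3) * ((3 / 5 : ℝ) * ((m : ℝ) + 1) ^ 2) := by
      push_cast; ring
    rw [e]
    exact mul_le_mul_of_nonneg_left h (by positivity)

theorem technical_condition_small_q (q : ℝ) (hq : q ∈ Set.Ioc (0 : ℝ) (9 / 25))
    (n : ℕ) (hn : 9 ≤ n) :
    q ^ n / (1 - q ^ (2 * n)) ≤ 7 * q ^ (Real.sqrt n) / (37 * (n : ℝ) ^ 2) := by
  obtain ⟨h0, h1⟩ := hq
  have hn' : (9 : ℝ) ≤ n := by exact_mod_cast hn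
  have hs : Real.sqrt n ^ 2 = n := Real.sq_sqrt (by positivity)
  have hexp : ((n : ℝ) + 3) / 2 ≤ n - Real.sqrt n := by
    nlinarith [sq_nonneg (Real.sqrt n - 3)]
  have hA : q ^ ((n : ℝ) - Real.sqrt n) ≤ (3 / 5 : ℝ) ^ (n + 3) := by
    calc q ^ ((n : ℝ) - Real.sqrt n) ≤ q ^ (((n : ℝ) + 3) / 2) :=
          Real.rpow_le_rpow_of_exponent_ge h0 (by linarith) hexp
      _ ≤ (9 / 25 : ℝ) ^ (((n : ℝ) + 3) / 2) :=
          Real.rpow_le_rpow h0.le h1 (by positivity)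
      _ = (3 / 5 : ℝ) ^ (n + 3) := by
          rw [show (9 / 25 : ℝ) = (3 / 5 : ℝ) ^ (2 : ℝ) by norm_num,
            ← Real.rpow_mul (by norm_num), ← Real.rpow_natCast]
          congr 1
          push_cast; ring
  have hB : q ^ (2 * n) ≤ (9 / 25 : ℝ) ^ 18 := by
    calc q ^ (2 * n) ≤ q ^ 18 := pow_le_pow_of_le_one h0.le (by linarith) (by omega)
      _ ≤ _ := pow_le_pow_left₀ h0.le h1 18
  have hsplit : q ^ n = q ^ (Real.sqrt n) * q ^ ((n : ℝ) - Real.sqrt n) := by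
    rw [← Real.rpow_add h0, ← Real.rpow_natCast]
    congr 1; ring
  have hC := aux_pow_bound n hn
  have hpos : 0 < 1 - q ^ (2 * n) := by
    have : (9 / 25 : ℝ) ^ 18 < 1 := by norm_num
    linarith
  have hnum : 37 * ((3 / 5 : ℝ) ^ 12 * 81) ≤ 7 * (1 - (9 / 25 : ℝ) ^ 18) := by norm_num
  have hD : q ^ ((n : ℝ) - Real.sqrt n) * (n : ℝ) ^ 2 ≤ (3 / 5 : ℝ) ^ (n + 3) * (n : ℝ) ^ 2 :=
    mul_le_mul_of_nonneg_right hA (by positivity)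
  have hE : q ^ ((n : ℝ) - Real.sqrt n) * (37 * (n : ℝ) ^ 2) ≤ 7 * (1 - q ^ (2 * n)) := by
    linarith
  rw [div_le_div_iff₀ hpos (by positivity), hsplit]
  have := mul_le_mul_of_nonneg_left hE (Real.rpow_pos_of_pos h0 (Real.sqrt n)).le
  linarith
end

section
/- Let q ∈ (9/25, 1) and let n ≥ 9 be an integer satisfying the inequality (★): (43/(10(1−q)))·q^{√n} + (160/(57(n−√n)))·q/(1−q)² ≤ (1/2 + 2q/((1+q²)(1−q)))·((1−q)/(1+q))^{4/(1−q²)}. Then q^n/(1 − q^{2n}) ≤ 7·q^{√n}/(37·n²). -/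
open Real

set_option maxHeartbeats 1000000 in
theorem technical_condition_large_q (q : ℝ) (hq : q ∈ Set.Ioo (9 / 25 : ℝ) 1)
    (n : ℕ) (hn : 9 ≤ n)
    (hstar : 43 / (10 * (1 - q)) * q ^ (Real.sqrt n) +
        160 / (57 * ((n : ℝ) - Real.sqrt n)) * (q / (1 - q) ^ 2) ≤
      (1 / 2 + 2 * q / ((1 + q ^ 2) * (1 - q))) *
        ((1 - q) / (1 + q)) ^ ((4 : ℝ) / (1 - q ^ 2))) :
    q ^ n / (1 - q ^ (2 * n)) ≤ 7 * q ^ (Real.sqrt n) / (37 * (n : ℝ) ^ 2) := by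
  obtain ⟨h1, h2⟩ := hq
  have hq0 : 0 < q := by linarith
  have hd : 0 < 1 - q := by linarith
  have hp : 0 < 1 + q := by linarith
  have hnR : (9 : ℝ) ≤ n := by exact_mod_cast hn
  have hrpn : q ^ (n : ℝ) = q ^ n := Real.rpow_natCast q n
  have hpow2 : q ^ (2 * n) = q ^ n * q ^ n := by rw [two_mul, pow_add]
  rw [hpow2, ← hrpn]
  generalize (n : ℝ) = N at *
  obtain ⟨s, hs⟩ : ∃ s, s = Real.sqrt N := ⟨_, rfl⟩
  rw [← hs] at hstar ⊢
  have hs3 : 3 ≤ s := by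
    rw [hs]; exact Real.le_sqrt_of_sq_le (by linarith)
  have hsq : s ^ 2 = N := by rw [hs]; exact Real.sq_sqrt (by linarith)
  have hNs : 0 < N - s := by nlinarith
  have hqs : 0 < q ^ s := Real.rpow_pos_of_pos hq0 s
  -- step 1
  have hu : 0 < (1 - q) / (1 + q) := by positivity
  have hu1 : (1 - q) / (1 + q) ≤ 1 := by rw [div_le_one hp]; linarith
  have hpw : ((1 - q) / (1 + q)) ^ ((4 : ℝ) / (1 - q ^ 2)) ≤ ((1 - q) / (1 + q)) ^ 4 := by
    rw [← Real.rpow_natCast ((1 - q) / (1 + q)) 4]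
    apply Real.rpow_le_rpow_of_exponent_ge hu hu1
    have : 0 < 1 - q ^ 2 := by nlinarith
    rw [le_div_iff₀ this]
    push_cast
    nlinarith
  have hC : 1 / 2 + 2 * q / ((1 + q ^ 2) * (1 - q)) ≤ (1 + q) / (1 - q) := by
    have e : (1 + q) / (1 - q) - (1 / 2 + 2 * q / ((1 + q ^ 2) * (1 - q)))
        = (1 - q + q ^ 2 + 3 * q ^ 3) / (2 * (1 + q ^ 2) * (1 - q)) := by
      field_simp
      ring
    have : 0 ≤ (1 - q + q ^ 2 + 3 * q ^ 3) / (2 * (1 + q ^ 2) * (1 - q)) := by positivity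
    linarith
  have hR : (1 / 2 + 2 * q / ((1 + q ^ 2) * (1 - q))) *
        ((1 - q) / (1 + q)) ^ ((4 : ℝ) / (1 - q ^ 2)) ≤ ((1 - q) / (1 + q)) ^ 3 := by
    calc _ ≤ (1 + q) / (1 - q) * ((1 - q) / (1 + q)) ^ 4 := by gcongr
      _ = _ := by field_simp
  have hA : 160 / (57 * N) * (q / (1 - q) ^ 2) ≤ 160 / (57 * (N - s)) * (q / (1 - q) ^ 2) := by
    gcongr
    linarith
  have hB : 0 ≤ 43 / (10 * (1 - q)) * q ^ s := by positivity
  have hmain : 160 / (57 * N) * (q / (1 - q) ^ 2) ≤ ((1 - q) / (1 + q)) ^ 3 := by linarith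
  have hN0 : 0 < N := by linarith
  have hmain2 : 160 * q * (1 + q) ^ 3 ≤ 57 * N * (1 - q) ^ 5 := by
    rw [div_mul_div_comm, div_pow, div_le_div_iff₀ (by positivity) (by positivity)] at hmain
    nlinarith
  have hlow : 228 * (1 - q) ^ 3 ≤ 160 * q * (1 + q) := by
    have a : (1 - q) ^ 3 ≤ (16 / 25) ^ 3 := by gcongr; linarith
    nlinarith
  have hkey : 2 * (1 + q) ≤ s * (1 - q) := by
    have h3 : 0 < (1 - q) ^ 3 := by positivity
    have a : 228 * (1 - q) ^ 3 * (1 + q) ^ 2 ≤ 160 * q * (1 + q) * (1 + q) ^ 2 := by gcongr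
    have b : (1 - q) ^ 3 * (4 * (1 + q) ^ 2) ≤ (1 - q) ^ 3 * (N * (1 - q) ^ 2) := by nlinarith
    have c := le_of_mul_le_mul_left b h3
    rw [← hsq] at c
    have c2 : (2 * (1 + q)) ^ 2 ≤ (s * (1 - q)) ^ 2 := by linarith
    exact abs_le_of_sq_le_sq' c2 (by positivity) |>.2
  -- step 2
  have hL : 2 * (1 - q) / (1 + q) ≤ - Real.log q := by
    have hx : 0 ≤ 1 / q - 1 := by
      rw [sub_nonneg, le_div_iff₀ hq0]; linarith
    have := Real.le_log_one_add_of_nonneg hx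
    have e1 : 1 + (1 / q - 1) = q⁻¹ := by rw [one_div]; ring
    rw [e1, Real.log_inv] at this
    refine le_trans (le_of_eq ?_) this
    have : 1 / q - 1 + 2 = (1 + q) / q := by field_simp; ring
    rw [this]
    field_simp
  have hLs : 4 ≤ - Real.log q * s := by
    have : 2 * (1 - q) / (1 + q) * s ≤ - Real.log q * s := by gcongr
    refine le_trans ?_ this
    rw [div_mul_eq_mul_div, le_div_iff₀ hp]
    linarith
  obtain ⟨E, hE⟩ : ∃ E, E = q ^ (N - s) := ⟨_, rfl⟩
  have hE0 : 0 < E := by rw [hE]; exact Real.rpow_pos_of_pos hq0 _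
  have hqN : q ^ N = q ^ s * E := by
    rw [hE, ← Real.rpow_add hq0]; congr 1; ring
  have hexp : 5 / 3 * s ≤ Real.exp (s - 1) := by
    have := Real.quadratic_le_exp_of_nonneg (x := s - 1) (by linarith)
    nlinarith
  have hEb : E * Real.exp (s - 1) ^ 4 ≤ 1 := by
    rw [hE, Real.rpow_def_of_pos hq0, ← Real.exp_nat_mul, ← Real.exp_add, Real.exp_le_one_iff]
    push_cast
    rw [← hsq]
    have := mul_le_mul_of_nonneg_right hLs (show 0 ≤ s - 1 by linarith)
    linarith
  have hEs : E * (5 / 3 * s) ^ 4 ≤ 1 := by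
    refine le_trans ?_ hEb
    gcongr
  have hs4 : (5 / 3 * s) ^ 4 = 625 / 81 * N ^ 2 := by rw [← hsq]; ring
  rw [hs4] at hEs
  have hqs1 : q ^ s ≤ 1 := Real.rpow_le_one hq0.le h2.le (by linarith)
  have hE1 : E ≤ 1 / 100 := by
    have a : (81 : ℝ) ≤ N ^ 2 := by nlinarith
    have b := mul_le_mul_of_nonneg_left a hE0.le
    linarith
  have hqN1 : q ^ N ≤ 1 / 100 := by 
    have := mul_le_mul_of_nonneg_right hqs1 hE0.le
    rw [hqN]
    linarith
  have hqN0 : 0 < q ^ N := Real.rpow_pos_of_pos hq0 _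
  have hqq : q ^ N * q ^ N ≤ 1 / 100 := by
    have := mul_le_mul_of_nonneg_left hqN1 hqN0.le
    linarith
  rw [div_le_div_iff₀ (by linarith) (by positivity)]
  have f : E * (37 * N ^ 2) ≤ 7 * (1 - q ^ N * q ^ N) := by linarith
  calc q ^ N * (37 * N ^ 2) = q ^ s * (E * (37 * N ^ 2)) := by rw [hqN]; ring
    _ ≤ q ^ s * (7 * (1 - q ^ N * q ^ N)) := by gcongr
    _ = _ := by ring
end

section
/- Let q ∈ (0,1) and let n ≥ 9 be an integer with n > (9(1+q)/(4(1−q)))². Then q^n/(1 − q^{2n}) ≤ 7·q^{√n}/(37·n²). -/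
open Real

theorem technical_condition_of_n_large (q : ℝ) (hq : q ∈ Set.Ioo (0 : ℝ) 1)
    (n : ℕ) (hn : 9 ≤ n) (hbig : (n : ℝ) > (9 * (1 + q) / (4 * (1 - q))) ^ 2) :
    q ^ n / (1 - q ^ (2 * n)) ≤ 7 * q ^ (Real.sqrt n) / (37 * (n : ℝ) ^ 2) := by
  obtain ⟨h0, h1⟩ := hq
  have hn' : (9 : ℝ) ≤ n := by exact_mod_cast hn
  obtain ⟨s, hs⟩ : ∃ s, s = Real.sqrt n := ⟨_, rfl⟩
  have hss : s ^ 2 = n := by rw [hs]; exact Real.sq_sqrt (by linarith)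
  have hs3 : 3 ≤ s := by rw [hs]; exact Real.le_sqrt_of_sq_le (by linarith)
  have h1q : 0 < 1 - q := by linarith
  have hsb : 9 * (1 + q) / (4 * (1 - q)) < s := by
    apply lt_of_pow_lt_pow_left₀ 2 (by linarith)
    rw [hss]; exact hbig
  rw [div_lt_iff₀ (by linarith)] at hsb
  obtain ⟨L, hL⟩ : ∃ L, L = - Real.log q := ⟨_, rfl⟩
  have hLlow : 2 * (1 - q) / (1 + q) ≤ L := by
    have hx : 0 ≤ 1 / q - 1 := by
      rw [sub_nonneg, le_div_iff₀ h0]; linarith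
    have := Real.le_log_one_add_of_nonneg hx
    have e1 : 1 + (1 / q - 1) = q⁻¹ := by field_simp; ring
    have e2 : 2 * (1 / q - 1) / (1 / q - 1 + 2) = 2 * (1 - q) / (1 + q) := by
      have : 1 / q - 1 + 2 = (1 + q) / q := by field_simp; ring
      rw [this]; field_simp
    rw [e1, e2, Real.log_inv] at this
    rw [hL]; exact this
  rw [div_le_iff₀ (by linarith)] at hLlow
  have hLs : 9 / 2 ≤ L * s := by
    have h2 : 9 / 2 * (1 + q) ≤ (L * s) * (1 + q) := by nlinarith
    exact le_of_mul_le_mul_right h2 (by linarith)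
  have hA : q ^ n = Real.exp (-(L * s ^ 2)) := by
    rw [← Real.rpow_natCast, Real.rpow_def_of_pos h0, hss, hL]; ring_nf
  have hB : q ^ s = Real.exp (-(L * s)) := by
    rw [Real.rpow_def_of_pos h0, hL]; ring_nf
  have hAE : q ^ n * Real.exp (4 * (s - 1)) ≤ q ^ s := by
    rw [hA, hB, ← Real.exp_add, Real.exp_le_exp]
    nlinarith
  have hE : 29 * s ^ 4 ≤ Real.exp (4 * (s - 1)) := by
    have e : Real.exp (4 * (s - 1)) = (Real.exp (s - 3) * (Real.exp 1) ^ 2) ^ 4 := by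
      rw [← Real.exp_nat_mul, ← Real.exp_add, ← Real.exp_nat_mul]; push_cast; ring_nf
    have h3 := Real.add_one_le_exp (s - 3)
    have h4 : 7 ≤ (Real.exp 1) ^ 2 := by nlinarith [Real.exp_one_gt_d9]
    have h5 : 7 / 3 * s ≤ Real.exp (s - 3) * (Real.exp 1) ^ 2 := by nlinarith
    rw [e]
    calc 29 * s ^ 4 ≤ (7 / 3 * s) ^ 4 := by
          rw [mul_pow]; gcongr; norm_num
      _ ≤ _ := by gcongr
  have hApos : 0 < q ^ n := by positivity
  have hBpos : 0 < q ^ s := by positivity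
  have hB1 : q ^ s ≤ 1 := Real.rpow_le_one h0.le h1.le (by linarith)
  have h29 : 29 * (q ^ n * s ^ 4) ≤ q ^ s := by nlinarith
  have hs4 : 1 ≤ s ^ 4 := one_le_pow₀ (by linarith)
  have hAs : q ^ n ≤ 1 / 29 := by nlinarith
  have hA2 : q ^ (2 * n) ≤ 1 / 2 := by
    rw [mul_comm, pow_mul]; nlinarith
  rw [← hs, div_le_div_iff₀ (by linarith) (by positivity)]
  have : (n : ℝ) ^ 2 = s ^ 4 := by rw [← hss]; ring
  rw [this]
  nlinarith
end
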